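/- arXiv:1707.00826 — 3 statements merged into one kernel-verified Lean document; each statement's English description precedes it below -/
import Mathlib

section
/- Let u₁, u₂ be linearly independent vectors in the Euclidean plane ℝ² and let W = {a·u₁ + b·u₂ : a ≥ 0, b ≥ 0} be the closed convex cone (wedge) they generate. Then for every nonzero vector v ∈ ℝ² and every ε > 0, there exist points x, y ∈ ℝ² \ W with ‖x‖ < ε, ‖y‖ < ε, ⟨v, x⟩ > 0, and ⟨v, y⟩ < 0. -/
open scoped RealInnerProductSpace

theorem wedge_aux
    (u₁ u₂ : EuclideanSpace ℝ (Fin 2))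
    (hind : LinearIndependent ℝ ![u₁, u₂])
    (v : EuclideanSpace ℝ (Fin 2)) (hv : v ≠ 0) (ε : ℝ) (hε : 0 < ε) :
    ∃ x : EuclideanSpace ℝ (Fin 2),
      (¬ ∃ a b : ℝ, 0 ≤ a ∧ 0 ≤ b ∧ x = a • u₁ + b • u₂) ∧ ‖x‖ < ε ∧ 0 < ⟪v, x⟫ := by
  have key : ∃ c d : ℝ, (c < 0 ∨ d < 0) ∧ 0 < ⟪v, c • u₁ + d • u₂⟫ := by
    by_cases hp : ⟪v, u₁⟫ = 0
    · by_cases hq : ⟪v, u₂⟫ = 0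
      · exfalso
        have hs := hind.span_eq_top_of_card_eq_finrank (by simp)
        have hm : v ∈ Submodule.span ℝ (Set.range ![u₁, u₂]) := by rw [hs]; trivial
        rw [Matrix.range_cons, Matrix.range_cons, Matrix.range_empty, Set.union_empty,
          Set.singleton_union, Submodule.mem_span_pair] at hm
        obtain ⟨a, b, hab⟩ := hm
        apply hv
        rw [← inner_self_eq_zero (𝕜 := ℝ)]
        nth_rewrite 2 [← hab]
        simp [inner_add_right, inner_smul_right, hp, hq]
      · refine ⟨-1, (⟪v, u₁⟫ + 1) / ⟪v, u₂⟫, Or.inl (by norm_num), ?_⟩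
        rw [inner_add_right, inner_smul_right, inner_smul_right, div_mul_cancel₀ _ hq]
        linarith
    · refine ⟨(⟪v, u₂⟫ + 1) / ⟪v, u₁⟫, -1, Or.inr (by norm_num), ?_⟩
      rw [inner_add_right, inner_smul_right, inner_smul_right, div_mul_cancel₀ _ hp]
      linarith
  obtain ⟨c, d, hcd, hpos⟩ := key
  set z := c • u₁ + d • u₂ with hz
  have hn : 0 < ‖z‖ + 1 := by positivity
  have hδ : 0 < ε / (‖z‖ + 1) := by positivity
  refine ⟨(ε / (‖z‖ + 1)) • z, ?_, ?_, ?_⟩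
  · rintro ⟨a, b, ha, hb, h⟩
    generalize ε / (‖z‖ + 1) = δ at hδ h
    have h2 : (δ * c - a) • u₁ + (δ * d - b) • u₂ = 0 := by
      rw [hz] at h
      rw [← sub_eq_zero] at h
      rw [← h]
      module
    obtain ⟨h3, h4⟩ := LinearIndependent.pair_iff.1 hind _ _ h2
    rcases hcd with h | h
    · nlinarith [mul_neg_of_pos_of_neg hδ h]
    · nlinarith [mul_neg_of_pos_of_neg hδ h]
  · rw [norm_smul, Real.norm_of_nonneg hδ.le, div_mul_eq_mul_div, div_lt_iff₀ hn]
    nlinarith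
  · rw [inner_smul_right]
    positivity

theorem wedge_complement_both_sides
    (u₁ u₂ : EuclideanSpace ℝ (Fin 2))
    (hind : LinearIndependent ℝ ![u₁, u₂])
    (W : Set (EuclideanSpace ℝ (Fin 2)))
    (hW : W = {w | ∃ a b : ℝ, 0 ≤ a ∧ 0 ≤ b ∧ w = a • u₁ + b • u₂}) :
    ∀ v : EuclideanSpace ℝ (Fin 2), v ≠ 0 → ∀ ε : ℝ, 0 < ε →
      ∃ x y : EuclideanSpace ℝ (Fin 2), x ∉ W ∧ y ∉ W ∧
        ‖x‖ < ε ∧ ‖y‖ < ε ∧ 0 < ⟪v, x⟫ ∧ ⟪v, y⟫ < 0 := by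
  intro v hv ε hε
  obtain ⟨x, hx, hx1, hx2⟩ := wedge_aux u₁ u₂ hind v hv ε hε
  obtain ⟨y, hy, hy1, hy2⟩ := wedge_aux u₁ u₂ hind (-v) (neg_ne_zero.2 hv) ε hε
  subst hW
  rw [inner_neg_left] at hy2
  exact ⟨x, y, hx, hy, hx1, hy1, hx2, by linarith⟩
end

section
/- Let n ≥ 1 be a natural number and r₁ > 1 a real number. In the Euclidean plane ℝ², let p = (0, r₁), p₁ = (sin(π/n), cos(π/n)), and p₂ = (−sin(π/n), cos(π/n)). Suppose q₁ and q₂ are points on the unit circle (‖q₁‖ = ‖q₂‖ = 1) such that q₁ is collinear with p and p₁ with q₁ ≠ p₁, and q₂ is collinear with p and p₂ with q₂ ≠ p₂. Then dist(q₁, q₂) ≤ (2π/n) · (r₁ + 1)/(r₁ − 1). -/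
open Real

lemma aux_second (s c r : ℝ) (h : s ^ 2 + c ^ 2 = 1) (hr : 1 < r)
    (p p₁ q : EuclideanSpace ℝ (Fin 2))
    (hp : p = (WithLp.equiv 2 (Fin 2 → ℝ)).symm ![0, r])
    (hp₁ : p₁ = (WithLp.equiv 2 (Fin 2 → ℝ)).symm ![s, c])
    (hq : ‖q‖ = 1)
    (hcol : Collinear ℝ ({p, p₁, q} : Set (EuclideanSpace ℝ (Fin 2))))
    (hne : q ≠ p₁) :
    q 0 = (r ^ 2 - 1) / (r ^ 2 - 2 * r * c + 1) * s ∧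
    q 1 = r + (r ^ 2 - 1) / (r ^ 2 - 2 * r * c + 1) * (c - r) := by
  have hc : c ≤ 1 := by nlinarith [sq_nonneg s]
  have hD : 0 < r ^ 2 - 2 * r * c + 1 := by nlinarith [sq_nonneg (r - 1)]
  rw [collinear_iff_of_mem (p₀ := p) (by simp)] at hcol
  obtain ⟨v, hv⟩ := hcol
  obtain ⟨a, ha⟩ := hv p₁ (by simp)
  obtain ⟨b, hb⟩ := hv q (by simp)
  have p0 : p 0 = 0 := by simp [hp]
  have p1 : p 1 = r := by simp [hp]
  have a0 : s = a * v 0 := by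
    have := congrArg (fun x : EuclideanSpace ℝ (Fin 2) => x 0) ha
    simpa [hp₁, p0] using this
  have a1 : c = a * v 1 + r := by
    have := congrArg (fun x : EuclideanSpace ℝ (Fin 2) => x 1) ha
    simpa [hp₁, p1] using this
  have b0 : q 0 = b * v 0 := by
    have := congrArg (fun x : EuclideanSpace ℝ (Fin 2) => x 0) hb
    simpa [p0] using this
  have b1 : q 1 = b * v 1 + r := by
    have := congrArg (fun x : EuclideanSpace ℝ (Fin 2) => x 1) hb
    simpa [p1] using this
  have hq2 : q 0 ^ 2 + q 1 ^ 2 = 1 := by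
    have := EuclideanSpace.norm_sq_eq q
    rw [hq] at this
    simp [Fin.sum_univ_two] at this
    linarith
  have ha0 : a ≠ 0 := by
    rintro rfl
    linarith
  have hba : b ≠ a := by
    rintro rfl
    exact hne (hb.trans ha.symm)
  obtain ⟨t, rfl⟩ : ∃ t, b = t * a := ⟨b / a, by field_simp⟩
  have ht : t - 1 ≠ 0 := by
    intro h1
    apply hba
    have : t = 1 := by linarith
    simp [this]
  have e0 : q 0 = t * s := by rw [b0, a0]; ring
  have e1 : q 1 = r + t * (c - r) := by rw [b1, a1]; ring
  have key : t * (r ^ 2 - 2 * r * c + 1) = r ^ 2 - 1 := by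
    apply mul_left_cancel₀ ht
    rw [e0, e1] at hq2
    linear_combination hq2 + (t - t ^ 2 - t) * h
  have ht' : t = (r ^ 2 - 1) / (r ^ 2 - 2 * r * c + 1) := by
    rw [eq_div_iff hD.ne']; exact key
  rw [← ht']
  exact ⟨e0, e1⟩

theorem second_intersections_dist_bound
    (n : ℕ) (hn : 1 ≤ n) (r₁ : ℝ) (hr₁ : 1 < r₁)
    (p p₁ p₂ q₁ q₂ : EuclideanSpace ℝ (Fin 2))
    (hp : p = (WithLp.equiv 2 (Fin 2 → ℝ)).symm ![0, r₁])
    (hp₁ : p₁ = (WithLp.equiv 2 (Fin 2 → ℝ)).symm ![sin (π / n), cos (π / n)])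
    (hp₂ : p₂ = (WithLp.equiv 2 (Fin 2 → ℝ)).symm ![-sin (π / n), cos (π / n)])
    (hq₁ : ‖q₁‖ = 1) (hq₂ : ‖q₂‖ = 1)
    (hcol₁ : Collinear ℝ ({p, p₁, q₁} : Set (EuclideanSpace ℝ (Fin 2))))
    (hne₁ : q₁ ≠ p₁)
    (hcol₂ : Collinear ℝ ({p, p₂, q₂} : Set (EuclideanSpace ℝ (Fin 2))))
    (hne₂ : q₂ ≠ p₂) :
    dist q₁ q₂ ≤ 2 * π / n * ((r₁ + 1) / (r₁ - 1)) := by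
  have hsc := sin_sq_add_cos_sq (π / n)
  obtain ⟨x0, x1⟩ := aux_second _ _ r₁ hsc hr₁ p p₁ q₁ hp hp₁ hq₁ hcol₁ hne₁
  obtain ⟨y0, y1⟩ := aux_second (-sin (π / n)) _ r₁ (by rw [neg_sq]; exact hsc) hr₁ p p₂ q₂ hp hp₂
    hq₂ hcol₂ hne₂
  have hn' : (1 : ℝ) ≤ n := by exact_mod_cast hn
  have hpos : 0 ≤ π / n := by positivity
  have hs : sin (π / n) ≤ π / n := sin_le hpos
  have hs0 : 0 ≤ sin (π / n) := sin_nonneg_of_nonneg_of_le_pi hpos (div_le_self pi_pos.le hn')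
  have hc : cos (π / n) ≤ 1 := cos_le_one _
  generalize sin (π / n) = s at *
  generalize cos (π / n) = c at *
  have h1 : 0 < r₁ - 1 := by linarith
  have hT : (r₁ ^ 2 - 1) / (r₁ ^ 2 - 2 * r₁ * c + 1) ≤ (r₁ + 1) / (r₁ - 1) := by
    have : (r₁ + 1) / (r₁ - 1) = (r₁ ^ 2 - 1) / (r₁ - 1) ^ 2 := by field_simp; ring
    rw [this]
    apply div_le_div_of_nonneg_left
    · nlinarith
    · positivity
    · nlinarith
  have hT0 : 0 ≤ (r₁ ^ 2 - 1) / (r₁ ^ 2 - 2 * r₁ * c + 1) := by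
    apply div_nonneg <;> nlinarith [sq_nonneg (r₁ - 1)]
  generalize (r₁ ^ 2 - 1) / (r₁ ^ 2 - 2 * r₁ * c + 1) = t at *
  have hd : dist q₁ q₂ = 2 * (t * s) := by
    rw [EuclideanSpace.dist_eq, Fin.sum_univ_two, x0, x1, y0, y1, dist_self, Real.dist_eq, sq_abs]
    rw [show (t * s - t * -s) ^ 2 + 0 ^ 2 = (2 * (t * s)) ^ 2 by ring]
    exact Real.sqrt_sq (by positivity)
  rw [hd]
  calc 2 * (t * s) ≤ 2 * ((r₁ + 1) / (r₁ - 1) * (π / n)) := by gcongr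
    _ = _ := by ring
end

section
/- Let n ≥ 7 be a natural number. In the Euclidean plane ℝ², let p = (0, 4), p₁ = (sin(π/n), cos(π/n)), and p₂ = (−sin(π/n), cos(π/n)). Suppose q₁ and q₂ are points on the unit circle (‖q₁‖ = ‖q₂‖ = 1) such that q₁ is collinear with p and p₁ with q₁ ≠ p₁, and q₂ is collinear with p and p₂ with q₂ ≠ p₂. Then the angle between q₁ and q₂ (the angle ∠(q₁, 0, q₂) at the origin) is strictly less than 4π/n. -/
open Real

lemma aux_coords (s c : ℝ) (hsc : s ^ 2 + c ^ 2 = 1)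
    (p p₁ q : EuclideanSpace ℝ (Fin 2))
    (hp : p = (WithLp.equiv 2 (Fin 2 → ℝ)).symm ![0, 4])
    (hp₁ : p₁ = (WithLp.equiv 2 (Fin 2 → ℝ)).symm ![s, c])
    (hq : ‖q‖ = 1)
    (hcol : Collinear ℝ ({p, p₁, q} : Set (EuclideanSpace ℝ (Fin 2))))
    (hne : q ≠ p₁) :
    q 0 * (17 - 8 * c) = 15 * s ∧ q 1 * (17 - 8 * c) = 8 - 17 * c := by
  have hc : c ≤ 1 := by nlinarith [sq_nonneg s]
  have hn : q 0 ^ 2 + q 1 ^ 2 = 1 := by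
    have := EuclideanSpace.norm_sq_eq q
    rw [hq] at this
    simp [Fin.sum_univ_two] at this
    linarith
  rw [collinear_iff_of_mem (p₀ := p) (by simp)] at hcol
  obtain ⟨v, hv⟩ := hcol
  obtain ⟨a, ha⟩ := hv p₁ (by simp)
  obtain ⟨b, hb⟩ := hv q (by simp)
  have a0 : s = a * v 0 := by
    have := congrArg (fun z : EuclideanSpace ℝ (Fin 2) => z 0) ha
    simpa [hp, hp₁] using this
  have a1 : c = a * v 1 + 4 := by
    have := congrArg (fun z : EuclideanSpace ℝ (Fin 2) => z 1) ha
    simpa [hp, hp₁] using this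
  have b0 : q 0 = b * v 0 := by
    have := congrArg (fun z : EuclideanSpace ℝ (Fin 2) => z 0) hb
    simpa [hp] using this
  have b1 : q 1 = b * v 1 + 4 := by
    have := congrArg (fun z : EuclideanSpace ℝ (Fin 2) => z 1) hb
    simpa [hp] using this
  have ha0 : a ≠ 0 := by
    rintro rfl
    linarith
  obtain ⟨t, rfl⟩ : ∃ t, b = t * a := ⟨b / a, by field_simp⟩
  have x0 : q 0 = t * s := by rw [b0, a0]; ring
  have x1 : q 1 = t * (c - 4) + 4 := by rw [b1, a1]; ring
  have ht : t ≠ 1 := by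
    rintro rfl
    apply hne
    ext i
    fin_cases i
    · simp [hp₁, x0]
    · simp [hp₁, x1]
  have key : t * (17 - 8 * c) = 15 := by
    rw [x0, x1] at hn
    have : (t - 1) * (t * (17 - 8 * c) - 15) = 0 := by
      linear_combination hn - t ^ 2 * hsc
    rcases mul_eq_zero.mp this with h | h
    · exact absurd (by linarith) ht
    · linarith
  constructor
  · rw [x0]; linear_combination s * key
  · rw [x1]; linear_combination (c - 4) * key

theorem second_intersections_angle_bound
    (n : ℕ) (hn : 7 ≤ n)
    (p p₁ p₂ q₁ q₂ : EuclideanSpace ℝ (Fin 2))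
    (hp : p = (WithLp.equiv 2 (Fin 2 → ℝ)).symm ![0, 4])
    (hp₁ : p₁ = (WithLp.equiv 2 (Fin 2 → ℝ)).symm ![sin (π / n), cos (π / n)])
    (hp₂ : p₂ = (WithLp.equiv 2 (Fin 2 → ℝ)).symm ![-sin (π / n), cos (π / n)])
    (hq₁ : ‖q₁‖ = 1) (hq₂ : ‖q₂‖ = 1)
    (hcol₁ : Collinear ℝ ({p, p₁, q₁} : Set (EuclideanSpace ℝ (Fin 2))))
    (hne₁ : q₁ ≠ p₁)
    (hcol₂ : Collinear ℝ ({p, p₂, q₂} : Set (EuclideanSpace ℝ (Fin 2))))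
    (hne₂ : q₂ ≠ p₂) :
    EuclideanGeometry.angle q₁ (0 : EuclideanSpace ℝ (Fin 2)) q₂ < 4 * π / n := by
  have hsc := sin_sq_add_cos_sq (π / n)
  obtain ⟨h1, h2⟩ := aux_coords _ _ hsc p p₁ q₁ hp hp₁ hq₁ hcol₁ hne₁
  obtain ⟨h3, h4⟩ := aux_coords _ _ (by simpa using hsc) p p₂ q₂ hp hp₂ hq₂ hcol₂ hne₂
  have hn' : (7 : ℝ) ≤ n := by exact_mod_cast hn
  have hpos : 0 < π / n := by positivity
  have hle : π / n ≤ π / 7 := by gcongr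
  have hpi := pi_lt_d2
  have hpi0 := pi_pos
  have hs : 0 < sin (π / n) := sin_pos_of_pos_of_lt_pi hpos (by linarith)
  have hcb : 5 / 8 < cos (π / n) := by
    have := one_sub_sq_div_two_le_cos (x := π / n)
    nlinarith
  have h4e : 4 * π / n = 4 * (π / n) := by ring
  rw [h4e]
  generalize π / n = θ at *
  have hc1 := cos_le_one θ
  have hD : 0 < 17 - 8 * cos θ := by linarith
  have e0 : q₂ 0 = - q₁ 0 := by
    apply mul_right_cancel₀ hD.ne'; linarith
  have e1 : q₂ 1 = q₁ 1 := by
    apply mul_right_cancel₀ hD.ne'; linarith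
  have hN : q₁ 0 ^ 2 + q₁ 1 ^ 2 = 1 := by
    have := EuclideanSpace.norm_sq_eq q₁
    rw [hq₁] at this
    simp [Fin.sum_univ_two] at this
    linarith
  have hX0 : 0 < q₁ 0 := by
    by_contra h
    push Not at h
    nlinarith
  have hX : q₁ 0 < sin (2 * θ) := by
    rw [sin_two_mul]
    have : 0 < 2 * cos θ * (17 - 8 * cos θ) - 15 := by nlinarith
    have h5 := mul_pos hs this
    by_contra h
    push Not at h
    nlinarith [mul_le_mul_of_nonneg_right h hD.le]
  have hcos : cos (4 * θ) = 1 - 2 * sin (2 * θ) ^ 2 := by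
    have : 4 * θ = 2 * (2 * θ) := by ring
    rw [this, cos_two_mul, cos_sq']; ring
  have hang : EuclideanGeometry.angle q₁ (0 : EuclideanSpace ℝ (Fin 2)) q₂
      = arccos (1 - 2 * q₁ 0 ^ 2) := by
    unfold EuclideanGeometry.angle InnerProductGeometry.angle
    congr 1
    simp [hq₁, hq₂, PiLp.inner_apply, Fin.sum_univ_two, e0, e1]
    nlinarith
  rw [hang, ← arccos_cos (x := 4 * θ) (by linarith) (by linarith)]
  apply arccos_lt_arccos (neg_one_le_cos _)
  · rw [hcos]; nlinarith
  · have := sq_nonneg (q₁ 0)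
    linarith
end
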